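/- Let 𝒞 : X → 2^𝒫 be a Krylov set-valued map and let ζ_n be one of the functionals ζ_n(P) = ∫₀^∞ e^{−λ_n t} ∫ φ_n(w(t)) P(dw) dt. Then the set-valued map V_{ζ_n}[𝒞] : x ↦ V_{ζ_n}[𝒞(x)] = {P ∈ 𝒞(x) : ζ_n(P) = sup_{Q ∈ 𝒞(x)} ζ_n(Q)} is also a Krylov map. -/

import Mathlib

open MeasureTheory Set
open scoped NNReal

noncomputable section

/-- The space `Ω = C([0,∞) → X)` with the compact-open topology. -/
abbrev IPath (X : Type*) [TopologicalSpace X] : Type _ := C(ℝ≥0, X)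

variable {X : Type*} [TopologicalSpace X]

/-- The shift `θ_s : w(·) ↦ w(s + ·)`. -/
def shift (s : ℝ≥0) (w : IPath X) : IPath X :=
  w.comp ⟨fun t => s + t, by fun_prop⟩

lemma shift_continuous (s : ℝ≥0) : Continuous (shift (X := X) s) :=
  ContinuousMap.continuous_precomp _

/-- The Borel σ-algebra `ℱ` on the path space. -/
instance : MeasurableSpace (IPath X) := borel _
instance : BorelSpace (IPath X) := ⟨rfl⟩

/-- The push-forward `θ_s P` of a probability measure on path space by the shift. -/
def pshift (s : ℝ≥0) (P : ProbabilityMeasure (IPath X)) :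
    ProbabilityMeasure (IPath X) :=
  P.map (f := shift s) (shift_continuous s).measurable.aemeasurable

/-- Convexity of a set of probability measures. -/
def ConvexMeasSet {Ω' : Type*} [MeasurableSpace Ω']
    (C : Set (ProbabilityMeasure Ω')) : Prop :=
  ∀ P ∈ C, ∀ Q ∈ C, ∀ a b : ℝ≥0, a + b = 1 →
    ∀ R : ProbabilityMeasure Ω',
      (R : Measure Ω') = a • (P : Measure Ω') + b • (Q : Measure Ω') → R ∈ C

/-- `Q f = ∫ f dQ` for a bounded continuous `f` on path space. -/
def intBCF (f : BoundedContinuousFunction (IPath X) ℝ)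
    (Q : ProbabilityMeasure (IPath X)) : ℝ :=
  ∫ w, f w ∂(Q : Measure (IPath X))

/-- The support function `h_x[f] = sup {P f : P ∈ 𝒞 x}`. -/
def hSupp (C : X → Set (ProbabilityMeasure (IPath X))) (x : X)
    (f : BoundedContinuousFunction (IPath X) ℝ) : ℝ :=
  sSup (intBCF f '' C x)

/-- The set `K(P, s, 𝒞) = {Q : Q f ≤ ∫ h_{w(s)}[f] dP, ∀ f ∈ C_b(Ω)}`. -/
def Kset (C : X → Set (ProbabilityMeasure (IPath X)))
    (P : ProbabilityMeasure (IPath X)) (s : ℝ≥0) :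
    Set (ProbabilityMeasure (IPath X)) :=
  {Q | ∀ f : BoundedContinuousFunction (IPath X) ℝ,
    intBCF f Q ≤ ∫ w, hSupp C (w s) f ∂(P : Measure (IPath X))}

/-- The functional `ζ_n(P) = ∫₀^∞ e^{-λ_n t} ∫ φ_n(w(t)) P(dw) dt`. -/
def zetaP (lam : ℝ) (phi : X → ℝ) (P : ProbabilityMeasure (IPath X)) : ℝ :=
  ∫ t in Ioi (0 : ℝ), Real.exp (-lam * t) *
    ∫ w, phi (w (Real.toNNReal t)) ∂(P : Measure (IPath X))

/-- The truncated functional `ζ_n^s(P) = ∫₀^s e^{-λ_n t} ∫ φ_n(w(t)) P(dw) dt`. -/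
def zetaPtrunc (lam : ℝ) (phi : X → ℝ) (s : ℝ≥0)
    (P : ProbabilityMeasure (IPath X)) : ℝ :=
  ∫ t in Ioc (0 : ℝ) (s : ℝ), Real.exp (-lam * t) *
    ∫ w, phi (w (Real.toNNReal t)) ∂(P : Measure (IPath X))

/-- The set `Γ[P, x, s](𝒞) = {Q ∈ 𝒞(x) : θ_s Q ∈ K(P, s, 𝒞), ζ_n^s(Q) ≥ ζ_n^s(P) ∀n}`. -/
def GammaSet (C : X → Set (ProbabilityMeasure (IPath X)))
    (lam : ℕ → ℝ) (phi : ℕ → X → ℝ)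
    (P : ProbabilityMeasure (IPath X)) (x : X) (s : ℝ≥0) :
    Set (ProbabilityMeasure (IPath X)) :=
  {Q | Q ∈ C x ∧ pshift s Q ∈ Kset C P s ∧
    ∀ n, zetaPtrunc (lam n) (phi n) s P ≤ zetaPtrunc (lam n) (phi n) s Q}

/-- A **Krylov set-valued map**: nonempty compact convex values (C1), measurable (C2),
`P(Ω_x) = 1` for `P ∈ 𝒞(x)` (C3), `θ_s P ∈ K(P, s, 𝒞)` (KP1), and
`θ_s(Γ[P, x, s](𝒞)) = K(P, s, 𝒞)` (KP2), for all `x`, `P ∈ 𝒞(x)`, `s > 0`. -/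
def IsKrylov {X : Type*} [TopologicalSpace X] [MeasurableSpace X]
    (C : X → Set (ProbabilityMeasure (IPath X)))
    (lam : ℕ → ℝ) (phi : ℕ → X → ℝ) : Prop :=
  (∀ x, (C x).Nonempty ∧ IsCompact (C x) ∧ ConvexMeasSet (C x)) ∧
  (∀ K : Set (ProbabilityMeasure (IPath X)), IsClosed K →
    MeasurableSet {x | (C x ∩ K).Nonempty}) ∧
  (∀ x, ∀ P ∈ C x, (P : Measure (IPath X)) {w : IPath X | w 0 = x} = 1) ∧
  (∀ x, ∀ P ∈ C x, ∀ s : ℝ≥0, 0 < s → pshift s P ∈ Kset C P s) ∧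
  (∀ x, ∀ P ∈ C x, ∀ s : ℝ≥0, 0 < s →
    pshift s '' GammaSet C lam phi P x s = Kset C P s)

/-- The set `V_η[K]` of maximizers of `η` over `K`. -/
def Vmax {α : Type*} (η : α → ℝ) (K : Set α) : Set α :=
  {P ∈ K | ∀ Q ∈ K, η Q ≤ η P}

/-- The properties of the data `(λ_n, φ_n)`: an enumeration of `Λ × Φ` where
`Λ ⊆ (0,∞)` is dense in `(0,∞)` and `Φ` is a countable family of bounded continuous
functions on `X` that strongly separates points and is closed under multiplication. -/
def GoodData {X : Type*} [TopologicalSpace X] (lam : ℕ → ℝ) (phi : ℕ → X → ℝ) : Prop :=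
  (∀ n, 0 < lam n) ∧
  (Ioi (0 : ℝ) ⊆ closure (range lam)) ∧
  (∀ n, Continuous (phi n)) ∧
  (∀ n, ∃ M, ∀ y, |phi n y| ≤ M) ∧
  (∀ x : X, ∀ V ∈ nhds x, ∃ n, ∃ ε > 0, ∀ y ∉ V, ε ≤ |phi n x - phi n y|) ∧
  (∀ m n, ∃ k, phi k = fun y => phi m y * phi n y) ∧
  (∀ m n, ∃ k, lam k = lam m ∧ phi k = phi n)
/-!
By Fubini `ζ(P) = P F` for a bounded continuous path functional `F`, and splitting the time integral
at `s` gives the dynamic programming identity `ζ(P) = ζ^s(P) + e^{-λ s} ζ(θ_s P)`.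

The heart of the matter is that maximization commutes with `K`: `K(P, s, V_F[𝒞]) = V_F[K(P, s, 𝒞)]`.
A kernel made of a measurable selection of `V_F[𝒞]` shows that `∫ h_{w(s)}[F] P(dw)` is the maximum
of `F` over `K(P, s, 𝒞)`. The support function of `V_F[𝒞(x)]` at `f` is the limit as `c → ∞` of
`h_x[f + c F] - c h_x[F]`, so testing a maximizer against `f + c F` and letting `c → ∞` puts it
in `K(P, s, V_F[𝒞])`.

If `P` maximizes `ζ` over `𝒞(x)`, every `Q ∈ Γ[P, x, s](𝒞)` has `ζ^s(Q) ≥ ζ^s(P)` and `ζ(Q) ≤ ζ(P)`.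
The identity then forces `ζ(θ_s Q) ≤ ζ(θ_s P)`, which is (KP1), and shows that `Q` is itself a
maximizer as soon as `θ_s Q` maximizes `ζ` over `K(P, s, 𝒞)`, which is (KP2).
-/

open Filter Topology
open scoped BoundedContinuousFunction

section Maximizers

variable {E : Type*} [TopologicalSpace E] {η : E → ℝ} {K L : Set E}

lemma Vmax_subset {α : Type*} (η : α → ℝ) (K : Set α) : Vmax η K ⊆ K := fun _ h => h.1

lemma Vmax_nonempty (hη : Continuous η) (hK : IsCompact K) (hne : K.Nonempty) :
    (Vmax η K).Nonempty := by
  obtain ⟨p, hp, hmax⟩ := hK.exists_isMaxOn hne hη.continuousOn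
  exact ⟨p, hp, fun q hq => hmax hq⟩

lemma isCompact_Vmax (hη : Continuous η) (hK : IsCompact K) : IsCompact (Vmax η K) := by
  have hVmax : Vmax η K = K ∩ ⋂ q ∈ K, {p | η q ≤ η p} := by
    ext p
    simp [Vmax]
  rw [hVmax]
  exact hK.inter_right (isClosed_biInter fun q _ => isClosed_le continuous_const hη)

lemma le_sSup_image (hη : Continuous η) (hK : IsCompact K) {p : E} (hp : p ∈ K) :
    η p ≤ sSup (η '' K) :=
  le_csSup (hK.bddAbove_image hη.continuousOn) (mem_image_of_mem η hp)

lemma eq_sSup_image_of_mem_Vmax {α : Type*} {η : α → ℝ} {K : Set α} {p : α}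
    (hp : p ∈ Vmax η K) : η p = sSup (η '' K) :=
  (IsGreatest.csSup_eq ⟨mem_image_of_mem η hp.1, forall_mem_image.2 hp.2⟩).symm

lemma Vmax_inter_nonempty_iff (hη : Continuous η) (hK : IsCompact K) (hne : K.Nonempty)
    (hL : IsClosed L) :
    (Vmax η K ∩ L).Nonempty ↔
      ∀ q : ℚ, (K ∩ {p | q ≤ η p}).Nonempty → (K ∩ ({p | q ≤ η p} ∩ L)).Nonempty := by
  constructor
  · rintro ⟨r, ⟨hr, hmax⟩, hrL⟩ q ⟨p, hp, hqp⟩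
    exact ⟨r, hr, le_trans hqp (hmax p hp), hrL⟩
  · intro h
    have hKL : (K ∩ L).Nonempty := by
      obtain ⟨p, hp⟩ := hne
      obtain ⟨q, hq⟩ := exists_rat_lt (η p)
      obtain ⟨r, hr, -, hrL⟩ := h q ⟨p, hp, hq.le⟩
      exact ⟨r, hr, hrL⟩
    obtain ⟨r, ⟨hr, hrL⟩, hmax⟩ := (hK.inter_right hL).exists_isMaxOn hKL hη.continuousOn
    refine ⟨r, ⟨hr, fun p hp => ?_⟩, hrL⟩
    by_contra! hlt
    obtain ⟨q, hrq, hqp⟩ := exists_rat_btwn hlt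
    obtain ⟨r', hr', hqr', hr'L⟩ := h q ⟨p, hp, hqp.le⟩
    exact (hrq.trans_le hqr').not_ge (hmax ⟨hr', hr'L⟩)

end Maximizers

section Penalization

variable {E : Type*} [TopologicalSpace E] {f F : E → ℝ} {K : Set E}

/-- The maximum over `K` of `f` penalized by `c` times the gap between `F` and its maximum on `K`.
As `c → ∞` it localizes to the maximum of `f` over `Vmax F K`. -/
def penalizedSup (f F : E → ℝ) (K : Set E) (c : ℝ) : ℝ :=
  sSup ((fun p => f p + c * F p) '' K) - c * sSup (F '' K)

lemma sSup_image_Vmax_le_penalizedSup (hf : Continuous f) (hF : Continuous F) (hK : IsCompact K)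
    (hne : K.Nonempty) (c : ℝ) : sSup (f '' Vmax F K) ≤ penalizedSup f F K c := by
  refine csSup_le ((Vmax_nonempty hF hK hne).image f) (forall_mem_image.2 fun p hp => ?_)
  have hle : f p + c * F p ≤ _ := le_sSup_image (hf.add (hF.const_mul c)) hK hp.1
  rw [eq_sSup_image_of_mem_Vmax hp] at hle
  exact le_sub_iff_add_le.2 hle

lemma penalizedSup_le (hf : Continuous f) (hF : Continuous F) (hK : IsCompact K)
    (hne : K.Nonempty) {c : ℝ} (hc : 0 ≤ c) : penalizedSup f F K c ≤ sSup (f '' K) := by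
  refine sub_le_iff_le_add.2 (csSup_le (hne.image _) (forall_mem_image.2 fun p hp => ?_))
  gcongr
  exacts [le_sSup_image hf hK hp, le_sSup_image hF hK hp]

lemma exists_penalized_lt {p : E} (hf : Continuous f) (hF : Continuous F) (hK : IsCompact K)
    (hp : p ∈ K) {b : ℝ} (hb : sSup (f '' Vmax F K) < b) :
    ∃ c, f p - c * (sSup (F '' K) - F p) < b := by
  rcases (le_sSup_image hF hK hp).eq_or_lt with hmax | hlt
  · have hpV : p ∈ Vmax F K := ⟨hp, fun q hq => hmax ▸ le_sSup_image hF hK hq⟩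
    exact ⟨0, by simpa using (le_sSup_image hf (isCompact_Vmax hF hK) hpV).trans_lt hb⟩
  · have hdiv := tendsto_id.atTop_mul_const (sub_pos.2 hlt)
    obtain ⟨c, hc⟩ := (hdiv.eventually_gt_atTop (f p - b)).exists
    exact ⟨c, by simp only [id_eq] at hc; linarith⟩

lemma eventually_forall_penalized_lt (hf : Continuous f) (hF : Continuous F) (hK : IsCompact K)
    {b : ℝ} (hb : sSup (f '' Vmax F K) < b) :
    ∀ᶠ c in atTop, ∀ p ∈ K, f p - c * (sSup (F '' K) - F p) < b := by
  obtain ⟨t, ht⟩ := hK.elim_finite_subcover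
    (fun c : ℝ => {p | f p - c * (sSup (F '' K) - F p) < b})
    (fun c => isOpen_lt (by fun_prop) continuous_const)
    (fun p hp => mem_iUnion.2 (exists_penalized_lt hf hF hK hp hb))
  have hlarge : ∀ᶠ c in atTop, ∀ i ∈ t, i ≤ c :=
    t.eventually_all.2 fun i _ => eventually_ge_atTop i
  filter_upwards [hlarge] with c hc p hp
  obtain ⟨i, hi, hpi⟩ := mem_iUnion₂.1 (ht hp)
  have hgap := mul_le_mul_of_nonneg_right (hc i hi) (sub_nonneg.2 (le_sSup_image hF hK hp))
  rw [mem_ofPred_eq] at hpi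
  linarith

theorem tendsto_penalizedSup (hf : Continuous f) (hF : Continuous F) (hK : IsCompact K)
    (hne : K.Nonempty) :
    Tendsto (penalizedSup f F K) atTop (𝓝 (sSup (f '' Vmax F K))) := by
  refine tendsto_order.2 ⟨fun a ha => .of_forall fun c =>
    ha.trans_le (sSup_image_Vmax_le_penalizedSup hf hF hK hne c), fun b hb => ?_⟩
  filter_upwards [eventually_forall_penalized_lt hf hF hK hb] with c hc
  have hcont : Continuous fun p => f p + c * F p := by fun_prop
  obtain ⟨p, hp, hmax⟩ := hK.exists_sSup_image_eq hne hcont.continuousOn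
  have hval : penalizedSup f F K c = f p - c * (sSup (F '' K) - F p) := by
    rw [penalizedSup, hmax]
    ring
  exact hval ▸ hc p hp

end Penalization

section Selection

variable {Y E : Type*} [MeasurableSpace Y] [TopologicalSpace E] {C : Y → Set E} {η : E → ℝ}

/-- A set-valued map with nonempty compact values that is measurable in the sense that it hits
every closed set on a measurable set of parameters: conditions (C1), (C2) without convexity. -/
structure IsMeasurableCompactValued (C : Y → Set E) : Prop where
  nonempty (y : Y) : (C y).Nonempty
  isCompact (y : Y) : IsCompact (C y)
  measurableSet_inter_nonempty {L : Set E} (hL : IsClosed L) :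
    MeasurableSet {y | (C y ∩ L).Nonempty}

namespace IsMeasurableCompactValued

lemma measurable_sSup_image (hC : IsMeasurableCompactValued C) (hη : Continuous η) :
    Measurable fun y => sSup (η '' C y) := by
  refine measurable_of_Ici fun a => ?_
  have hpre : (fun y => sSup (η '' C y)) ⁻¹' Ici a = {y | (C y ∩ {p | a ≤ η p}).Nonempty} := by
    ext y
    constructor
    · intro (ha : a ≤ sSup (η '' C y))
      obtain ⟨p, hp, hmax⟩ := (hC.isCompact y).exists_sSup_image_eq (hC.nonempty y) hη.continuousOn
      exact ⟨p, hp, ha.trans_eq hmax⟩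
    · rintro ⟨p, hp, ha⟩
      exact le_trans ha (le_sSup_image hη (hC.isCompact y) hp)
  rw [hpre]
  exact hC.measurableSet_inter_nonempty (isClosed_le continuous_const hη)

protected theorem Vmax (hC : IsMeasurableCompactValued C) (hη : Continuous η) :
    IsMeasurableCompactValued fun y => Vmax η (C y) where
  nonempty y := Vmax_nonempty hη (hC.isCompact y) (hC.nonempty y)
  isCompact y := isCompact_Vmax hη (hC.isCompact y)
  measurableSet_inter_nonempty {L} hL := by
    have hIci (q : ℚ) : IsClosed {p | (q : ℝ) ≤ η p} := isClosed_le continuous_const hη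
    simp only [Vmax_inter_nonempty_iff hη (hC.isCompact _) (hC.nonempty _) hL, ofPred_forall]
    exact .iInter fun q => (hC.measurableSet_inter_nonempty (hIci q)).imp
      (hC.measurableSet_inter_nonempty ((hIci q).inter hL))

end IsMeasurableCompactValued

/-- The points of `K` maximizing `ψ 0`, then `ψ 1` among these, and so on through `ψ (k - 1)`. -/
def lexVmax (ψ : E → ℕ → ℝ) (K : Set E) : ℕ → Set E
  | 0 => K
  | k + 1 => Vmax (fun p => ψ p k) (lexVmax ψ K k)

variable {ψ : E → ℕ → ℝ} {K L : Set E}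

lemma IsMeasurableCompactValued.lexVmax (hC : IsMeasurableCompactValued C) (hψ : Continuous ψ)
    (k : ℕ) : IsMeasurableCompactValued fun y => lexVmax ψ (C y) k := by
  induction k with
  | zero => exact hC
  | succ k ih => exact ih.Vmax ((continuous_apply k).comp hψ)

lemma isCompact_lexVmax (hψ : Continuous ψ) (hK : IsCompact K) (k : ℕ) :
    IsCompact (lexVmax ψ K k) := by
  induction k with
  | zero => exact hK
  | succ k ih => exact isCompact_Vmax ((continuous_apply k).comp hψ) ih

lemma iInter_lexVmax_inter_nonempty [T2Space E] (hψ : Continuous ψ) (hK : IsCompact K)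
    (hL : IsClosed L) (hne : ∀ k, (lexVmax ψ K k ∩ L).Nonempty) :
    (⋂ k, lexVmax ψ K k ∩ L).Nonempty := by
  have hcompact (k : ℕ) : IsCompact (lexVmax ψ K k ∩ L) :=
    (isCompact_lexVmax hψ hK k).inter_right hL
  exact IsCompact.nonempty_iInter_of_sequence_nonempty_isCompact_isClosed _
    (fun k => inter_subset_inter_left L (Vmax_subset _ _)) hne (hcompact 0)
    fun k => (hcompact k).isClosed

lemma iInter_lexVmax_subsingleton {E : Type*} {ψ : E → ℕ → ℝ} (hinj : Function.Injective ψ)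
    (K : Set E) : (⋂ k, lexVmax ψ K k).Subsingleton := by
  intro p hp q hq
  rw [mem_iInter] at hp hq
  exact hinj <| funext fun k => le_antisymm ((hq (k + 1)).2 p (hp k)) ((hp (k + 1)).2 q (hq k))

theorem IsMeasurableCompactValued.exists_measurable_selection (hC : IsMeasurableCompactValued C)
    (hψ : Continuous ψ) (hinj : Function.Injective ψ) :
    ∃ q : Y → E, Measurable[_, borel E] q ∧ ∀ y, q y ∈ C y := by
  have : T2Space E := .of_injective_continuous hinj hψ
  have hinter (y : Y) : (⋂ k, _root_.lexVmax ψ (C y) k).Nonempty := by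
    simpa only [inter_univ] using iInter_lexVmax_inter_nonempty hψ (hC.isCompact y) isClosed_univ
      fun k => by simpa only [inter_univ] using (hC.lexVmax hψ k).nonempty y
  choose q hq using hinter
  have hq_mem (y : Y) (k : ℕ) : q y ∈ _root_.lexVmax ψ (C y) k := mem_iInter.1 (hq y) k
  refine ⟨q, ?_, fun y => hq_mem y 0⟩
  rw [borel_eq_generateFrom_isClosed]
  refine measurable_generateFrom fun L hL => ?_
  have hpre : q ⁻¹' L = ⋂ k, {y | (_root_.lexVmax ψ (C y) k ∩ L).Nonempty} := by
    ext y
    rw [mem_iInter]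
    refine ⟨fun hy k => ⟨q y, hq_mem y k, hy⟩, fun hy => ?_⟩
    obtain ⟨p, hp⟩ := iInter_lexVmax_inter_nonempty hψ (hC.isCompact y) hL hy
    rw [← iInter_inter] at hp
    rw [mem_preimage, ← iInter_lexVmax_subsingleton hinj (C y) hp.1 (hq y)]
    exact hp.2
  rw [hpre]
  exact .iInter fun k => (hC.lexVmax hψ k).measurableSet_inter_nonempty hL

end Selection

section WeakTopology

variable {W : Type*} [TopologicalSpace W] [MeasurableSpace W] [BorelSpace W]

lemma exists_seq_isClosed_isPiSystem_generateFrom [SecondCountableTopology W] :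
    ∃ G : ℕ → Set W, (∀ k, IsClosed (G k)) ∧ IsPiSystem (range G) ∧
      ‹MeasurableSpace W› = MeasurableSpace.generateFrom (range G) := by
  classical
  let B := TopologicalSpace.countableBasis W
  have hB : TopologicalSpace.IsTopologicalBasis B := TopologicalSpace.isBasis_countableBasis W
  let H (T : Finset B) : Set W := ⋂ U ∈ T, (U : Set W)ᶜ
  have hclosed (T : Finset B) : IsClosed (H T) :=
    isClosed_biInter fun U _ => (hB.isOpen U.2).isClosed_compl
  obtain ⟨e, he⟩ := exists_surjective_nat (Finset B)
  have hrange : range (H ∘ e) = range H := he.range_comp H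
  refine ⟨H ∘ e, fun k => hclosed (e k), hrange ▸ ?_, hrange ▸ le_antisymm ?_ ?_⟩
  · rintro _ ⟨T, rfl⟩ _ ⟨T', rfl⟩ -
    exact ⟨T ∪ T', Finset.set_biInter_inter T T' _⟩
  · rw [BorelSpace.measurable_eq (α := W), hB.borel_eq_generateFrom]
    refine MeasurableSpace.generateFrom_le fun U hU => MeasurableSet.of_compl ?_
    have hmem : Uᶜ ∈ range H := ⟨{⟨U, hU⟩}, by simp only [H, Finset.set_biInter_singleton]⟩
    exact MeasurableSpace.measurableSet_generateFrom hmem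
  · exact MeasurableSpace.generateFrom_le (forall_mem_range.2 fun T => (hclosed T).measurableSet)

variable [TopologicalSpace.PseudoMetrizableSpace W]

lemma tendsto_testAgainstNN_apprSeq {G : Set W} (hG : IsClosed G) (P : ProbabilityMeasure W) :
    Tendsto (fun m => P.toFiniteMeasure.testAgainstNN (hG.apprSeq m)) atTop (𝓝 (P G)) := by
  rw [← ENNReal.tendsto_coe]
  simpa [FiniteMeasure.testAgainstNN_coe_eq] using
    HasOuterApproxClosed.tendsto_lintegral_apprSeq hG (P : Measure W)

lemma measurable_borel_toMeasure :
    Measurable[borel (ProbabilityMeasure W)] (fun P => (P : Measure W)) := by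
  borelize (ProbabilityMeasure W)
  refine Measurable.measure_of_isPiSystem_of_isProbabilityMeasure (S := {G | IsClosed G})
    (borel_eq_generateFrom_isClosed (α := W) ▸ BorelSpace.measurable_eq) isPiSystem_isClosed
    fun G hG => ?_
  have happr : Measurable fun P : ProbabilityMeasure W => P G :=
    measurable_of_tendsto_metrizable
      (fun m => (ProbabilityMeasure.continuous_testAgainstNN_eval (hG.apprSeq m)).measurable)
      (tendsto_pi_nhds.2 (tendsto_testAgainstNN_apprSeq hG))
  simpa using happr.coe_nnreal_ennreal

variable [SecondCountableTopology W]

lemma exists_continuous_injective_probabilityMeasure :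
    ∃ ψ : ProbabilityMeasure W → ℕ → ℝ, Continuous ψ ∧ Function.Injective ψ := by
  obtain ⟨G, hclosed, hpi, hgen⟩ := exists_seq_isClosed_isPiSystem_generateFrom (W := W)
  refine ⟨fun P k => P.toFiniteMeasure.testAgainstNN ((hclosed k.unpair.1).apprSeq k.unpair.2),
    continuous_pi fun k =>
      NNReal.continuous_coe.comp (ProbabilityMeasure.continuous_testAgainstNN_eval _),
    fun P Q hPQ => Subtype.ext ?_⟩
  have hG (k : ℕ) : P (G k) = Q (G k) := by
    refine tendsto_nhds_unique (tendsto_testAgainstNN_apprSeq (hclosed k) P)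
      ((tendsto_testAgainstNN_apprSeq (hclosed k) Q).congr fun m => ?_)
    simpa using (congrFun hPQ (Nat.pair k m)).symm
  have : IsProbabilityMeasure P.1 := P.2
  refine ext_of_generate_finite (range G) hgen hpi (forall_mem_range.2 fun k => ?_) (by simp)
  simpa using congrArg ((↑) : ℝ≥0 → ENNReal) (hG k)

theorem IsMeasurableCompactValued.exists_kernel {Y : Type*} [MeasurableSpace Y]
    {C : Y → Set (ProbabilityMeasure W)} (hC : IsMeasurableCompactValued C) :
    ∃ (κ : ProbabilityTheory.Kernel Y W) (q : Y → ProbabilityMeasure W),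
      ∀ y, κ y = q y ∧ q y ∈ C y := by
  obtain ⟨ψ, hψ, hinj⟩ := exists_continuous_injective_probabilityMeasure (W := W)
  obtain ⟨q, hq, hmem⟩ := hC.exists_measurable_selection hψ hinj
  exact ⟨⟨fun y => q y, measurable_borel_toMeasure.comp hq⟩, q, fun y => ⟨rfl, hmem y⟩⟩

end WeakTopology

section Discounting

lemma integral_Ioi_exp_mul_eq_add {lam s : ℝ} (hs : 0 ≤ s) {g : ℝ → ℝ}
    (hg : IntegrableOn (fun t => Real.exp (-lam * t) * g t) (Ioi 0)) :
    ∫ t in Ioi 0, Real.exp (-lam * t) * g t = (∫ t in Ioc 0 s, Real.exp (-lam * t) * g t) +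
      Real.exp (-lam * s) * ∫ t in Ioi 0, Real.exp (-lam * t) * g (t + s) := by
  have htail : ∫ t in Ioi s, Real.exp (-lam * t) * g t =
      Real.exp (-lam * s) * ∫ t in Ioi 0, Real.exp (-lam * t) * g (t + s) := by
    have htranslate := (measurePreserving_add_right volume s).setIntegral_preimage_emb
      (measurableEmbedding_addRight s) (fun t => Real.exp (-lam * t) * g t) (Ioi s)
    rw [← htranslate, ← integral_const_mul]
    simp only [preimage_add_const_Ioi, sub_self, mul_add, Real.exp_add]
    exact integral_congr_ae (.of_forall fun t => by ring)
  rw [← htail, ← setIntegral_union (Ioc_disjoint_Ioi le_rfl) measurableSet_Ioi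
    (hg.mono_set Ioc_subset_Ioi_self) (hg.mono_set (Ioi_subset_Ioi hs)), Ioc_union_Ioi_eq_Ioi hs]

variable {lam : ℝ}

lemma continuous_exp_mul_comp_eval (lam : ℝ) (φ : X →ᵇ ℝ) :
    Continuous fun p : IPath X × ℝ => Real.exp (-lam * p.2) * φ (p.1 p.2.toNNReal) := by
  fun_prop

lemma norm_exp_mul_comp_eval_le (lam : ℝ) (φ : X →ᵇ ℝ) (w : IPath X) (t : ℝ) :
    ‖Real.exp (-lam * t) * φ (w t.toNNReal)‖ ≤ Real.exp (-lam * t) * ‖φ‖ := by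
  rw [norm_mul, Real.norm_eq_abs, Real.abs_exp]
  gcongr
  exact φ.norm_coe_le_norm _

lemma integrableOn_exp_neg_mul_const (hlam : 0 < lam) (M : ℝ) :
    IntegrableOn (fun t => Real.exp (-lam * t) * M) (Ioi 0) :=
  (exp_neg_integrableOn_Ioi 0 hlam).mul_const M

lemma integrable_exp_mul_comp_eval (hlam : 0 < lam) (φ : X →ᵇ ℝ)
    (P : ProbabilityMeasure (IPath X)) :
    Integrable (fun p : IPath X × ℝ => Real.exp (-lam * p.2) * φ (p.1 p.2.toNNReal))
      ((P : Measure (IPath X)).prod (volume.restrict (Ioi 0))) :=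
  Integrable.mono' ((integrableOn_exp_neg_mul_const hlam ‖φ‖).comp_snd _)
    (continuous_exp_mul_comp_eval lam φ).aestronglyMeasurable
    (.of_forall fun p => norm_exp_mul_comp_eval_le lam φ p.1 p.2)

lemma integral_pshift (s : ℝ≥0) (P : ProbabilityMeasure (IPath X)) {f : IPath X → ℝ}
    (hf : Continuous f) :
    ∫ w, f w ∂(pshift s P : Measure (IPath X)) = ∫ w, f (shift s w) ∂(P : Measure (IPath X)) :=
  integral_map (shift_continuous s).measurable.aemeasurable hf.aestronglyMeasurable

theorem zetaP_eq_zetaPtrunc_add (hlam : 0 < lam) (φ : X →ᵇ ℝ) (s : ℝ≥0)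
    (P : ProbabilityMeasure (IPath X)) :
    zetaP lam φ P = zetaPtrunc lam φ s P + Real.exp (-lam * s) * zetaP lam φ (pshift s P) := by
  have hint := (integrable_exp_mul_comp_eval hlam φ P).integral_prod_right
  simp only [integral_const_mul] at hint
  rw [zetaP, integral_Ioi_exp_mul_eq_add s.coe_nonneg hint, zetaPtrunc, zetaP]
  congr 2
  refine setIntegral_congr_fun measurableSet_Ioi fun t (ht : 0 < t) => ?_
  have hshift (w : IPath X) : w (t + s).toNNReal = shift s w t.toNNReal := by
    rw [Real.toNNReal_add ht.le s.coe_nonneg, Real.toNNReal_coe, add_comm]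
    rfl
  simp only [integral_pshift s P (f := fun w => φ (w t.toNNReal)) (by fun_prop), hshift]

variable [TopologicalSpace.PseudoMetrizableSpace X]

/-- The discounted path functional `w ↦ ∫₀^∞ e^{-λ t} φ(w(t)) dt`, whose expectation is `zetaP`. -/
def discountedIntegral (hlam : 0 < lam) (φ : X →ᵇ ℝ) : IPath X →ᵇ ℝ :=
  .ofNormedAddCommGroup (fun w => ∫ t in Ioi 0, Real.exp (-lam * t) * φ (w t.toNNReal))
    (continuous_of_dominated
      (fun w => (by fun_prop : Continuous _).aestronglyMeasurable)
      (fun w => .of_forall (norm_exp_mul_comp_eval_le lam φ w))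
      (integrableOn_exp_neg_mul_const hlam ‖φ‖) (.of_forall fun t => by fun_prop))
    (∫ t in Ioi 0, Real.exp (-lam * t) * ‖φ‖)
    fun w => norm_integral_le_of_norm_le (integrableOn_exp_neg_mul_const hlam ‖φ‖)
      (.of_forall (norm_exp_mul_comp_eval_le lam φ w))

theorem zetaP_eq_intBCF (hlam : 0 < lam) (φ : X →ᵇ ℝ) :
    zetaP lam φ = intBCF (discountedIntegral hlam φ) := by
  ext P
  simp only [zetaP, ← integral_const_mul]
  exact integral_integral_swap (integrable_exp_mul_comp_eval hlam φ P).swap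

end Discounting

section Support

variable {C D : X → Set (ProbabilityMeasure (IPath X))} {F : IPath X →ᵇ ℝ}
  {P : ProbabilityMeasure (IPath X)} {s : ℝ≥0}

lemma continuous_intBCF (f : IPath X →ᵇ ℝ) : Continuous (intBCF f) :=
  ProbabilityMeasure.continuous_integral_boundedContinuousFunction f

lemma abs_intBCF_le (f : IPath X →ᵇ ℝ) (P : ProbabilityMeasure (IPath X)) :
    |intBCF f P| ≤ ‖f‖ :=
  f.norm_integral_le_norm (P : Measure (IPath X))

lemma intBCF_neg (f : IPath X →ᵇ ℝ) (P : ProbabilityMeasure (IPath X)) :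
    intBCF (-f) P = -intBCF f P :=
  integral_neg f

lemma intBCF_add_smul (f F : IPath X →ᵇ ℝ) (c : ℝ) (P : ProbabilityMeasure (IPath X)) :
    intBCF (f + c • F) P = intBCF f P + c * intBCF F P := by
  simp only [intBCF, BoundedContinuousFunction.coe_add, BoundedContinuousFunction.coe_smul,
    Pi.add_apply, smul_eq_mul]
  rw [integral_add (f.integrable _) ((F.integrable _).const_mul c), integral_const_mul]

lemma intBCF_of_eq_add {P Q R : ProbabilityMeasure (IPath X)} {a b : ℝ≥0}
    (hR : (R : Measure (IPath X)) = a • (P : Measure (IPath X)) + b • (Q : Measure (IPath X)))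
    (f : IPath X →ᵇ ℝ) : intBCF f R = a * intBCF f P + b * intBCF f Q := by
  simp only [intBCF, hR]
  rw [integral_add_measure (f.integrable _).smul_measure_nnreal
    (f.integrable _).smul_measure_nnreal, integral_smul_nnreal_measure,
    integral_smul_nnreal_measure, NNReal.smul_def, NNReal.smul_def, smul_eq_mul, smul_eq_mul]

lemma ConvexMeasSet.Vmax_intBCF {K : Set (ProbabilityMeasure (IPath X))} (hK : ConvexMeasSet K)
    (F : IPath X →ᵇ ℝ) : ConvexMeasSet (Vmax (intBCF F) K) := by
  intro P hP Q hQ a b hab R hR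
  refine ⟨hK P hP.1 Q hQ.1 a b hab R hR, fun T hT => ?_⟩
  calc intBCF F T = a * intBCF F T + b * intBCF F T := by
        rw [← add_mul, ← NNReal.coe_add, hab, NNReal.coe_one, one_mul]
    _ ≤ a * intBCF F P + b * intBCF F Q := by gcongr; exacts [hP.2 T hT, hQ.2 T hT]
    _ = intBCF F R := (intBCF_of_eq_add hR F).symm

lemma abs_sSup_image_intBCF_le {K : Set (ProbabilityMeasure (IPath X))} (hK : IsCompact K)
    (hne : K.Nonempty) (f : IPath X →ᵇ ℝ) : |sSup (intBCF f '' K)| ≤ ‖f‖ := by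
  obtain ⟨P, -, hP⟩ := hK.exists_sSup_image_eq hne (continuous_intBCF f).continuousOn
  rw [hP]
  exact abs_intBCF_le f P

lemma hSupp_mono {x : X} (hne : (D x).Nonempty) (hC : IsCompact (C x)) (hDC : D x ⊆ C x)
    (f : IPath X →ᵇ ℝ) : hSupp D x f ≤ hSupp C x f :=
  csSup_le_csSup (hC.bddAbove_image (continuous_intBCF f).continuousOn) (hne.image _)
    (image_mono hDC)

lemma hSupp_Vmax_neg {x : X} (hne : (C x).Nonempty) (hC : IsCompact (C x)) (F : IPath X →ᵇ ℝ) :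
    hSupp (fun y => Vmax (intBCF F) (C y)) x (-F) = -hSupp C x F := by
  obtain ⟨P, hP, hmax⟩ := (isCompact_Vmax (continuous_intBCF F) hC).exists_sSup_image_eq
    (Vmax_nonempty (continuous_intBCF F) hC hne) (continuous_intBCF (-F)).continuousOn
  rw [hSupp, hmax, intBCF_neg, eq_sSup_image_of_mem_Vmax hP, hSupp]

lemma integral_hSupp_le_of_mem_Kset_Vmax (hne : ∀ x, (C x).Nonempty)
    (hC : ∀ x, IsCompact (C x)) {Q : ProbabilityMeasure (IPath X)}
    (hQ : Q ∈ Kset (fun x => Vmax (intBCF F) (C x)) P s) :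
    ∫ w, hSupp C (w s) F ∂(P : Measure (IPath X)) ≤ intBCF F Q := by
  have htest := hQ (-F)
  simp only [hSupp_Vmax_neg (hne _) (hC _), integral_neg, intBCF_neg] at htest
  exact neg_le_neg_iff.1 htest

lemma hSupp_add_smul_sub (C : X → Set (ProbabilityMeasure (IPath X))) (x : X)
    (f F : IPath X →ᵇ ℝ) (c : ℝ) :
    hSupp C x (f + c • F) - c * hSupp C x F =
      penalizedSup (intBCF f) (intBCF F) (C x) c := by
  simp only [hSupp, penalizedSup, ← intBCF_add_smul]

variable [MeasurableSpace X] [BorelSpace X]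

lemma measurable_hSupp_eval (hC : IsMeasurableCompactValued C) (s : ℝ≥0) (f : IPath X →ᵇ ℝ) :
    Measurable fun w : IPath X => hSupp C (w s) f :=
  (hC.measurable_sSup_image (continuous_intBCF f)).comp (continuous_eval_const s).measurable

lemma integrable_hSupp_eval (hC : IsMeasurableCompactValued C)
    (P : ProbabilityMeasure (IPath X)) (s : ℝ≥0) (f : IPath X →ᵇ ℝ) :
    Integrable (fun w : IPath X => hSupp C (w s) f) (P : Measure (IPath X)) :=
  .mono' (integrable_const ‖f‖) (measurable_hSupp_eval hC s f).aestronglyMeasurable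
    (.of_forall fun w => abs_sSup_image_intBCF_le (hC.isCompact (w s)) (hC.nonempty (w s)) f)

lemma Kset_mono (hD : IsMeasurableCompactValued D) (hC : IsMeasurableCompactValued C)
    (hDC : ∀ x, D x ⊆ C x) : Kset D P s ⊆ Kset C P s := fun _ hQ f =>
  (hQ f).trans <| integral_mono (integrable_hSupp_eval hD P s f) (integrable_hSupp_eval hC P s f)
    fun w => hSupp_mono (hD.nonempty (w s)) (hC.isCompact (w s)) (hDC (w s)) f

lemma tendsto_integral_penalizedSup (hC : IsMeasurableCompactValued C)
    (P : ProbabilityMeasure (IPath X)) (s : ℝ≥0) (f F : IPath X →ᵇ ℝ) :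
    Tendsto (fun N : ℕ => ∫ w, penalizedSup (intBCF f) (intBCF F) (C (w s)) N
        ∂(P : Measure (IPath X))) atTop
      (𝓝 (∫ w, hSupp (fun x => Vmax (intBCF F) (C x)) (w s) f ∂(P : Measure (IPath X)))) := by
  have hf := continuous_intBCF f
  have hF := continuous_intBCF F
  have hV := hC.Vmax hF
  refine tendsto_integral_of_dominated_convergence (fun _ => ‖f‖) (fun N => ?_)
    (integrable_const _) (fun N => .of_forall fun w => abs_le.2 ⟨?_, ?_⟩)
    (.of_forall fun w => (tendsto_penalizedSup hf hF (hC.isCompact (w s))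
      (hC.nonempty (w s))).comp tendsto_natCast_atTop_atTop)
  · simp only [← hSupp_add_smul_sub]
    exact ((measurable_hSupp_eval hC s _).sub
      ((measurable_hSupp_eval hC s F).const_mul _)).aestronglyMeasurable
  · exact (neg_le_of_abs_le (abs_sSup_image_intBCF_le (hV.isCompact (w s)) (hV.nonempty (w s))
      f)).trans (sSup_image_Vmax_le_penalizedSup hf hF (hC.isCompact _) (hC.nonempty _) N)
  · exact (penalizedSup_le hf hF (hC.isCompact _) (hC.nonempty _) N.cast_nonneg).trans
      (le_of_abs_le (abs_sSup_image_intBCF_le (hC.isCompact (w s)) (hC.nonempty (w s)) f))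

lemma mem_Kset_Vmax_of_integral_hSupp_le (hC : IsMeasurableCompactValued C)
    {Q : ProbabilityMeasure (IPath X)} (hQ : Q ∈ Kset C P s)
    (hF : ∫ w, hSupp C (w s) F ∂(P : Measure (IPath X)) ≤ intBCF F Q) :
    Q ∈ Kset (fun x => Vmax (intBCF F) (C x)) P s := by
  refine fun f => ge_of_tendsto' (tendsto_integral_penalizedSup hC P s f F) fun N => ?_
  have htest := hQ (f + (N : ℝ) • F)
  have hgap := mul_le_mul_of_nonneg_left hF (N.cast_nonneg (α := ℝ))
  simp only [← hSupp_add_smul_sub]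
  rw [integral_sub (integrable_hSupp_eval hC P s _)
    ((integrable_hSupp_eval hC P s F).const_mul _), integral_const_mul]
  rw [intBCF_add_smul] at htest
  linarith

variable [TopologicalSpace.PseudoMetrizableSpace X] [SecondCountableTopology X]

lemma Kset_nonempty (hC : IsMeasurableCompactValued C) (P : ProbabilityMeasure (IPath X))
    (s : ℝ≥0) : (Kset C P s).Nonempty := by
  obtain ⟨κ, q, hq⟩ := hC.exists_kernel
  have : ProbabilityTheory.IsMarkovKernel κ := ⟨fun x => (hq x).1 ▸ inferInstance⟩
  let π := (κ.comap (fun w : IPath X => w s) (continuous_eval_const s).measurable).comp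
    (ProbabilityTheory.Kernel.const Unit (P : Measure (IPath X)))
  refine ⟨⟨π (), inferInstance⟩, fun f => ?_⟩
  have hf : Integrable f (π ()) := f.integrable _
  calc ∫ w, f w ∂π () = ∫ w, ∫ w', f w' ∂κ (w s) ∂(P : Measure (IPath X)) :=
        ProbabilityTheory.Kernel.integral_comp hf
    _ ≤ ∫ w, hSupp C (w s) f ∂(P : Measure (IPath X)) := by
        refine integral_mono hf.integral_comp (integrable_hSupp_eval hC P s f) fun w => ?_
        obtain ⟨hκ, hmem⟩ := hq (w s)
        exact hκ ▸ le_sSup_image (continuous_intBCF f) (hC.isCompact (w s)) hmem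

theorem Kset_Vmax (hC : IsMeasurableCompactValued C) (P : ProbabilityMeasure (IPath X))
    (s : ℝ≥0) (F : IPath X →ᵇ ℝ) :
    Kset (fun x => Vmax (intBCF F) (C x)) P s = Vmax (intBCF F) (Kset C P s) := by
  have hV := hC.Vmax (continuous_intBCF F)
  have hsub : Kset (fun x => Vmax (intBCF F) (C x)) P s ⊆ Kset C P s :=
    Kset_mono hV hC fun x => Vmax_subset _ _
  apply Subset.antisymm
  · exact fun Q hQ => ⟨hsub hQ, fun R hR =>
      (hR F).trans (integral_hSupp_le_of_mem_Kset_Vmax hC.nonempty hC.isCompact hQ)⟩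
  · intro Q hQ
    obtain ⟨R, hR⟩ := Kset_nonempty hV P s
    have hRF := integral_hSupp_le_of_mem_Kset_Vmax hC.nonempty hC.isCompact hR
    exact mem_Kset_Vmax_of_integral_hSupp_le hC hQ.1 (hRF.trans (hQ.2 R (hsub hR)))

end Support

section Krylov

variable {C : X → Set (ProbabilityMeasure (IPath X))} {lam : ℕ → ℝ} {phi : ℕ → X → ℝ} {n : ℕ}
  {x : X} {P Q : ProbabilityMeasure (IPath X)} {s : ℝ≥0}

lemma IsKrylov.isMeasurableCompactValued [MeasurableSpace X] (hK : IsKrylov C lam phi) :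
    IsMeasurableCompactValued C :=
  ⟨fun x => (hK.1 x).1, fun x => (hK.1 x).2.1, fun {L} hL => hK.2.1 L hL⟩

lemma zetaP_le_of_zetaPtrunc_le {lam : ℝ} (hlam : 0 < lam) (φ : X →ᵇ ℝ)
    (htrunc : zetaPtrunc lam φ s P ≤ zetaPtrunc lam φ s Q)
    (hshift : zetaP lam φ (pshift s P) ≤ zetaP lam φ (pshift s Q)) :
    zetaP lam φ P ≤ zetaP lam φ Q := by
  rw [zetaP_eq_zetaPtrunc_add hlam φ s P, zetaP_eq_zetaPtrunc_add hlam φ s Q]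
  gcongr

lemma zetaP_pshift_le_of_zetaPtrunc_le {lam : ℝ} (hlam : 0 < lam) (φ : X →ᵇ ℝ)
    (htrunc : zetaPtrunc lam φ s P ≤ zetaPtrunc lam φ s Q)
    (hle : zetaP lam φ Q ≤ zetaP lam φ P) :
    zetaP lam φ (pshift s Q) ≤ zetaP lam φ (pshift s P) := by
  rw [zetaP_eq_zetaPtrunc_add hlam φ s P, zetaP_eq_zetaPtrunc_add hlam φ s Q] at hle
  exact le_of_mul_le_mul_left (by linarith) (Real.exp_pos (-lam * s))

lemma IsKrylov.pshift_mem_Vmax_Kset [MeasurableSpace X] (hK : IsKrylov C lam phi)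
    (hlam : 0 < lam n) {φ : X →ᵇ ℝ} (hφ : phi n = φ)
    (hP : P ∈ Vmax (zetaP (lam n) (phi n)) (C x)) (hs : 0 < s) :
    pshift s P ∈ Vmax (zetaP (lam n) (phi n)) (Kset C P s) := by
  obtain ⟨-, -, -, hKP1, hKP2⟩ := hK
  refine ⟨hKP1 x P hP.1 s hs, ?_⟩
  rw [← hKP2 x P hP.1 s hs]
  rintro _ ⟨Q, ⟨hQ, -, htrunc⟩, rfl⟩
  specialize htrunc n
  have hle := hP.2 Q hQ
  rw [hφ] at htrunc hle ⊢
  exact zetaP_pshift_le_of_zetaPtrunc_le hlam φ htrunc hle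

lemma IsKrylov.exists_mem_Vmax_pshift_eq [MeasurableSpace X] (hK : IsKrylov C lam phi)
    (hlam : 0 < lam n) {φ : X →ᵇ ℝ} (hφ : phi n = φ)
    (hP : P ∈ Vmax (zetaP (lam n) (phi n)) (C x)) (hs : 0 < s)
    (hQ : Q ∈ Vmax (zetaP (lam n) (phi n)) (Kset C P s)) :
    ∃ R ∈ Vmax (zetaP (lam n) (phi n)) (C x),
      (∀ m, zetaPtrunc (lam m) (phi m) s P ≤ zetaPtrunc (lam m) (phi m) s R) ∧
        pshift s R = Q := by
  obtain ⟨-, -, -, hKP1, hKP2⟩ := hK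
  have hQΓ := hQ.1
  rw [← hKP2 x P hP.1 s hs] at hQΓ
  obtain ⟨R, ⟨hR, -, htrunc⟩, rfl⟩ := hQΓ
  have hPR : zetaP (lam n) (phi n) P ≤ zetaP (lam n) (phi n) R := by
    have htrunc_n := htrunc n
    have hshift := hQ.2 _ (hKP1 x P hP.1 s hs)
    rw [hφ] at htrunc_n hshift ⊢
    exact zetaP_le_of_zetaPtrunc_le hlam φ htrunc_n hshift
  exact ⟨R, ⟨hR, fun T hT => (hP.2 T hT).trans hPR⟩, htrunc, rfl⟩

end Krylov

theorem Vmax_isKrylov_general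
    {X : Type*} [TopologicalSpace X] [TopologicalSpace.PseudoMetrizableSpace X]
    [SecondCountableTopology X] [MeasurableSpace X] [BorelSpace X]
    {lam : ℕ → ℝ} {phi : ℕ → X → ℝ} {C : X → Set (ProbabilityMeasure (IPath X))}
    (hK : IsKrylov C lam phi) {n : ℕ} (hlam : 0 < lam n) (hcont : Continuous (phi n))
    (hbdd : ∃ M, ∀ y, |phi n y| ≤ M) :
    IsKrylov (fun x => Vmax (zetaP (lam n) (phi n)) (C x)) lam phi := by
  obtain ⟨M, hM⟩ := hbdd
  let φ : X →ᵇ ℝ := .ofNormedAddCommGroup (phi n) hcont M hM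
  have hφ : phi n = φ := rfl
  have hζ : zetaP (lam n) (phi n) = intBCF (discountedIntegral hlam φ) := zetaP_eq_intBCF hlam φ
  have hC := hK.isMeasurableCompactValued
  have hV : IsMeasurableCompactValued fun x => Vmax (zetaP (lam n) (phi n)) (C x) :=
    hC.Vmax (hζ ▸ continuous_intBCF _)
  have hconvex (x : X) : ConvexMeasSet (Vmax (zetaP (lam n) (phi n)) (C x)) :=
    hζ ▸ (hK.1 x).2.2.Vmax_intBCF _
  have hKset (P : ProbabilityMeasure (IPath X)) (s : ℝ≥0) :
      Kset (fun x => Vmax (zetaP (lam n) (phi n)) (C x)) P s =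
        Vmax (zetaP (lam n) (phi n)) (Kset C P s) := hζ ▸ Kset_Vmax hC P s _
  refine ⟨fun x => ⟨hV.nonempty x, hV.isCompact x, hconvex x⟩,
    fun L hL => hV.measurableSet_inter_nonempty hL, fun x P hP => hK.2.2.1 x P hP.1,
    fun x P hP s hs => hKset P s ▸ hK.pshift_mem_Vmax_Kset hlam hφ hP hs,
    fun x P hP s hs => Subset.antisymm (image_subset_iff.2 fun R hR => hR.2.1) fun Q hQ => ?_⟩
  obtain ⟨R, hR, htrunc, rfl⟩ := hK.exists_mem_Vmax_pshift_eq hlam hφ hP hs (hKset P s ▸ hQ)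
  exact ⟨R, ⟨hR, hQ, htrunc⟩, rfl⟩

/-- **The reduction lemma:** if `𝒞` is a Krylov set-valued map, then so is the map
`x ↦ V_{ζ_n}[𝒞(x)]` of maximizers of any one of the functionals `ζ_n`. -/
theorem Vmax_isKrylov
    {X : Type*} [TopologicalSpace X] [PolishSpace X] [MeasurableSpace X] [BorelSpace X]
    (lam : ℕ → ℝ) (phi : ℕ → X → ℝ) (hdata : GoodData lam phi)
    (C : X → Set (ProbabilityMeasure (IPath X)))
    (hK : IsKrylov C lam phi) (n : ℕ) :
    IsKrylov (fun x => Vmax (zetaP (lam n) (phi n)) (C x)) lam phi := by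
  exact Vmax_isKrylov_general hK (hdata.1 n) (hdata.2.2.1 n) (hdata.2.2.2.1 n)
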